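/- arXiv:2002.08824 — 6 statements merged into one kernel-verified Lean document; each statement's English description precedes it below -/
import Mathlib

section
/- Let M be a matroid of rank n−k on a ground set E of cardinality n, and let Σ′ be the set of chains S = (σ_1 ⊊ σ_2 ⊊ ⋯ ⊊ σ_k) such that σ_i ∈ N_i for every i. Then the bottom-up greedy weights of M satisfy (e_1,…,e_k) = min_lex { e(S) : S ∈ Σ′ }. -/
open Finset

/-- A matroid on ground set `Fin n`, given by its rank function. -/
structure MatroidRk (n : ℕ) where
  r : Finset (Fin n) → ℕ
  r_le_card : ∀ X, r X ≤ X.card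
  r_mono : ∀ ⦃X Y : Finset (Fin n)⦄, X ⊆ Y → r X ≤ r Y
  r_submod : ∀ X Y, r (X ∩ Y) + r (X ∪ Y) ≤ r X + r Y

namespace MatroidRk

variable {n : ℕ}

/-- The nullity function `n(X) = |X| - r(X)`. -/
def nul (M : MatroidRk n) (X : Finset (Fin n)) : ℕ := X.card - M.r X

/-- `X ∈ N_i`: `X` is inclusion-minimal among the subsets of nullity `i`. -/
def Nmin (M : MatroidRk n) (i : ℕ) (X : Finset (Fin n)) : Prop :=
  M.nul X = i ∧ ∀ Y ⊆ X, M.nul Y = i → Y = X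

/-- Membership in `Σ`: a chain `σ₁ ⊊ ⋯ ⊊ σ_k` with `σ_i ∈ 𝒩_i`. -/
def SigmaChain (M : MatroidRk n) (k : ℕ) (σ : Fin k → Finset (Fin n)) : Prop :=
  StrictMono σ ∧ ∀ i : Fin k, M.nul (σ i) = (i : ℕ) + 1

/-- Membership in `Σ'`: a chain `σ₁ ⊊ ⋯ ⊊ σ_k` with `σ_i ∈ N_i`. -/
def SigmaChain' (M : MatroidRk n) (k : ℕ) (σ : Fin k → Finset (Fin n)) : Prop :=
  StrictMono σ ∧ ∀ i : Fin k, M.Nmin ((i : ℕ) + 1) (σ i)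

/-- The set `{e(S) : S ∈ Σ}` of tuples of cardinalities of chains in `Σ`. -/
def eSet (M : MatroidRk n) (k : ℕ) : Set (Fin k → ℕ) :=
  {u | ∃ σ : Fin k → Finset (Fin n), M.SigmaChain k σ ∧ ∀ i, (σ i).card = u i}

/-- The set `{e(S) : S ∈ Σ'}`. -/
def eSet' (M : MatroidRk n) (k : ℕ) : Set (Fin k → ℕ) :=
  {u | ∃ σ : Fin k → Finset (Fin n), M.SigmaChain' k σ ∧ ∀ i, (σ i).card = u i}

/-- The generalized Hamming weight `d_i = min {|σ| : σ ∈ 𝒩_i}`. -/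
noncomputable def dW (M : MatroidRk n) (i : ℕ) : ℕ :=
  sInf {c | ∃ X, M.nul X = i ∧ X.card = c}

end MatroidRk

/-- `w` is the lexicographically smallest element of `A`. -/
def IsLexMin {k : ℕ} (A : Set (Fin k → ℕ)) (w : Fin k → ℕ) : Prop :=
  w ∈ A ∧ ∀ u ∈ A, toLex w ≤ toLex u

/-- `w` is the reverse-lexicographically smallest element of `A`. -/
def IsRevLexMin {k : ℕ} (A : Set (Fin k → ℕ)) (w : Fin k → ℕ) : Prop :=
  w ∈ A ∧ ∀ u ∈ A, toLex (w ∘ Fin.rev) ≤ toLex (u ∘ Fin.rev)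

namespace MatroidRk

theorem nul_add_r {n : ℕ} (M : MatroidRk n) (X : Finset (Fin n)) :
    M.nul X + M.r X = X.card := Nat.sub_add_cancel (M.r_le_card X)

theorem nul_supermod {n : ℕ} (M : MatroidRk n) (X Y : Finset (Fin n)) :
    M.nul X + M.nul Y ≤ M.nul (X ∩ Y) + M.nul (X ∪ Y) := by
  have h1 := M.nul_add_r X
  have h2 := M.nul_add_r Y
  have h3 := M.nul_add_r (X ∩ Y)
  have h4 := M.nul_add_r (X ∪ Y)
  have h5 := M.r_submod X Y
  have h6 := Finset.card_union_add_card_inter X Y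
  omega

theorem nul_mono {n : ℕ} (M : MatroidRk n) {X Y : Finset (Fin n)} (h : X ⊆ Y) :
    M.nul X ≤ M.nul Y := by
  have h1 := M.nul_supermod X (Y \ X)
  have h2 := M.nul_add_r ∅
  rw [Finset.union_sdiff_of_subset h, Finset.inter_sdiff_self] at h1
  rw [Finset.card_empty] at h2
  omega

theorem exists_Nmin {n : ℕ} (M : MatroidRk n) (X : Finset (Fin n)) :
    ∃ Y ⊆ X, M.Nmin (M.nul X) Y := by
  obtain ⟨Y, hY, hmin⟩ := Finset.exists_min_image
    (X.powerset.filter fun Y => M.nul Y = M.nul X) Finset.card ⟨X, by simp⟩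
  simp only [Finset.mem_filter, Finset.mem_powerset] at hY hmin
  exact ⟨Y, hY.1, hY.2, fun Z hZ hn =>
    Finset.eq_of_subset_of_card_le hZ (hmin Z ⟨hZ.trans hY.1, hn⟩)⟩

theorem Nmin_subset {n : ℕ} (M : MatroidRk n) {X X' Y Y' : Finset (Fin n)} (h : X ⊆ X')
    (hY : Y ⊆ X) (hY' : Y' ⊆ X') (m : M.Nmin (M.nul X) Y) (m' : M.Nmin (M.nul X') Y') :
    Y ⊆ Y' := by
  have h1 := M.nul_supermod Y Y'
  have h2 := M.nul_mono (Finset.union_subset (hY.trans h) hY')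
  have h3 := M.nul_mono (Finset.inter_subset_left (s₁ := Y) (s₂ := Y'))
  have h4 := m.1
  have h5 := m'.1
  exact Finset.inter_eq_left.mp (m.2 _ Finset.inter_subset_left (by omega))

theorem eSet'_subset {n k : ℕ} (M : MatroidRk n) : M.eSet' k ⊆ M.eSet k := by
  rintro u ⟨σ, ⟨h1, h2⟩, h3⟩
  exact ⟨σ, ⟨h1, fun i => (h2 i).1⟩, h3⟩

theorem exists_le {n k : ℕ} (M : MatroidRk n) (u : Fin k → ℕ) (hu : u ∈ M.eSet k) :
    ∃ v ∈ M.eSet' k, toLex v ≤ toLex u := by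
  obtain ⟨σ, ⟨h1, h2⟩, h3⟩ := hu
  choose τ hs hm using fun i => M.exists_Nmin (σ i)
  refine ⟨fun i => (τ i).card, ⟨τ, ⟨?_, ?_⟩, fun i => rfl⟩, Pi.toLex_monotone ?_⟩
  · intro i j hij
    refine lt_of_le_of_ne (M.Nmin_subset (h1 hij).le (hs i) (hs j) (hm i) (hm j)) fun he => ?_
    have a := (hm i).1
    have b := (hm j).1
    rw [he, b, h2, h2] at a
    have : (i : ℕ) < j := hij
    omega
  · intro i
    rw [← h2 i]
    exact hm i
  · intro i
    rw [← h3 i]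
    exact Finset.card_le_card (hs i)

end MatroidRk

open MatroidRk in
/-- the bottom-up greedy weights, defined as the lexicographic minimum of
`{e(S) : S ∈ Σ}`, coincide with the lexicographic minimum of `{e(S) : S ∈ Σ'}`. -/
theorem statement0 {n k : ℕ} (M : MatroidRk n) (hrk : M.r Finset.univ + k = n)
    (w : Fin k → ℕ) :
    IsLexMin (M.eSet k) w ↔ IsLexMin (M.eSet' k) w := by
  constructor
  · rintro ⟨hw, hmin⟩
    obtain ⟨v, hv, hle⟩ := M.exists_le w hw
    have he : toLex w = toLex v := le_antisymm (hmin v (M.eSet'_subset hv)) hle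
    have he' : w = v := toLex.injective he
    exact ⟨he' ▸ hv, fun u hu => hmin u (M.eSet'_subset hu)⟩
  · rintro ⟨hw, hmin⟩
    refine ⟨M.eSet'_subset hw, fun u hu => ?_⟩
    obtain ⟨v, hv, hle⟩ := M.exists_le u hu
    exact (hmin v hv).trans hle
end

section
/- Let M be a matroid of rank n−k on a ground set E of cardinality n, and let Σ′ be the set of chains S = (σ_1 ⊊ σ_2 ⊊ ⋯ ⊊ σ_k) such that σ_i ∈ N_i for every i. Then the top-down greedy weights of M satisfy (ẽ_1,…,ẽ_k) = min_revlex { e(S) : S ∈ Σ′ }. -/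
open Finset

namespace MatroidRk

theorem exists_sub_nul {n : ℕ} (M : MatroidRk n) (m : ℕ) (Y : Finset (Fin n)) :
    M.nul Y = m + 1 → ∃ Z ⊆ Y, M.nul Z = m := by
  induction Y using Finset.strongInduction with
  | H Y ih =>
    intro h
    have hne : Y.Nonempty := by
      rw [Finset.nonempty_iff_ne_empty]
      rintro rfl
      simp [nul] at h
    obtain ⟨x, hx⟩ := hne
    have h1 := M.r_submod (Y.erase x) {x}
    have h2 : Y.erase x ∪ {x} = Y := by
      ext a
      by_cases ha : a = x <;> simp [ha, hx]
    rw [h2] at h1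
    have h3 := M.r_le_card {x}
    rw [Finset.card_singleton] at h3
    have h4 := M.r_mono (Finset.erase_subset x Y)
    have h5 := Finset.card_erase_add_one hx
    have h6 := M.r_le_card Y
    have h7 := M.r_le_card (Y.erase x)
    have h8 : M.nul (Y.erase x) = m ∨ M.nul (Y.erase x) = m + 1 := by
      unfold nul at *
      omega
    rcases h8 with h8 | h8
    · exact ⟨_, Finset.erase_subset x Y, h8⟩
    · obtain ⟨Z, hZ, hZ2⟩ := ih _ (Finset.erase_ssubset hx) h8
      exact ⟨Z, hZ.trans (Finset.erase_subset x Y), hZ2⟩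

theorem exists_chain {n : ℕ} (M : MatroidRk n) (m : ℕ) : ∀ (Y : Finset (Fin n)),
    M.nul Y = m → ∃ τ : ℕ → Finset (Fin n), Monotone τ ∧ (∀ j, τ j ⊆ Y) ∧
      (∀ j ≤ m, M.nul (τ j) = j) ∧ τ m = Y := by
  induction m with
  | zero =>
    intro Y h
    refine ⟨fun _ => Y, monotone_const, fun _ => Finset.Subset.refl _, ?_, rfl⟩
    intro j hj
    rw [h]; omega
  | succ m ih =>
    intro Y h
    obtain ⟨Z, hZY, hZ⟩ := M.exists_sub_nul m Y h
    obtain ⟨τ, hm, hs, hn, ht⟩ := ih Z hZ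
    refine ⟨fun j => if j ≤ m then τ j else Y, ?_, ?_, ?_, ?_⟩
    · intro a b hab
      dsimp only
      split_ifs with h1 h2 h2
      · exact hm hab
      · exact (hs a).trans hZY
      · omega
      · exact le_refl _
    · intro j
      dsimp only
      split_ifs
      · exact (hs j).trans hZY
      · exact Finset.Subset.refl _
    · intro j hj
      dsimp only
      split_ifs with h1
      · exact hn j h1
      · rw [h]; omega
    · simp

theorem strictMono_of {n k : ℕ} (M : MatroidRk n) (σ : Fin k → Finset (Fin n))
    (hm : Monotone σ) (hn : ∀ i : Fin k, M.nul (σ i) = (i : ℕ) + 1) : StrictMono σ := by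
  apply hm.strictMono_of_injective
  intro a b hab
  have ha := hn a
  rw [hab, hn b] at ha
  exact Fin.ext (by omega)

theorem min_mem {n k : ℕ} (M : MatroidRk n) (w : Fin k → ℕ)
    (h : IsRevLexMin (M.eSet k) w) : w ∈ M.eSet' k := by
  obtain ⟨⟨σ, ⟨hs, hn⟩, hc⟩, hmin⟩ := h
  refine ⟨σ, ⟨hs, fun i => ⟨hn i, fun Y hY hYn => ?_⟩⟩, hc⟩
  by_contra hne
  obtain ⟨τ, hm, hsub, hτ, ht⟩ := M.exists_chain _ Y hYn
  let σ' : Fin k → Finset (Fin n) := fun j => if j ≤ i then τ (j + 1) else σ j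
  have hn' : ∀ j : Fin k, M.nul (σ' j) = (j : ℕ) + 1 := by
    intro j
    dsimp only [σ']
    split_ifs with h1
    · exact hτ _ (by have : (j : ℕ) ≤ i := h1
                     omega)
    · exact hn j
  have hm' : Monotone σ' := by
    intro a b hab
    dsimp only [σ']
    split_ifs with h1 h2 h2
    · exact hm (by have : (a : ℕ) ≤ b := hab
                   omega)
    · exact ((hsub _).trans hY).trans (hs.monotone (le_of_lt (not_le.mp h2)))
    · exact absurd (hab.trans h2) h1
    · exact hs.monotone hab
  have hle := hmin (fun j => (σ' j).card) ⟨σ', ⟨M.strictMono_of σ' hm' hn', hn'⟩, fun _ => rfl⟩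
  refine absurd hle (not_le.mpr ?_)
  refine ⟨Fin.rev i, ?_, ?_⟩
  · intro j hj
    have hj' : ¬ Fin.rev j ≤ i := by
      rw [not_le]
      exact Fin.lt_rev_iff.mp hj
    simp [σ', hj', hc]
  · have : Y.card < (σ i).card := Finset.card_lt_card (hY.ssubset_of_ne hne)
    simpa [σ', ht, ← hc] using this

end MatroidRk

open MatroidRk in
/-- the top-down greedy weights, defined as the reverse-lexicographic minimum of
`{e(S) : S ∈ Σ}`, coincide with the reverse-lexicographic minimum of `{e(S) : S ∈ Σ'}`. -/
theorem statement1 {n k : ℕ} (M : MatroidRk n) (hrk : M.r Finset.univ + k = n)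
    (w : Fin k → ℕ) :
    IsRevLexMin (M.eSet k) w ↔ IsRevLexMin (M.eSet' k) w := by
  constructor
  · intro h
    exact ⟨M.min_mem w h, fun u hu => h.2 u (M.eSet'_subset hu)⟩
  · intro h
    have hwf : WellFounded (fun a b : Lex (Fin k → ℕ) => a < b) := wellFounded_lt
    obtain ⟨v, hv, hvm⟩ := (InvImage.wf (fun u : Fin k → ℕ => toLex (u ∘ Fin.rev)) hwf).has_min
      (M.eSet k) ⟨w, M.eSet'_subset h.1⟩
    have hv' : IsRevLexMin (M.eSet k) v := ⟨hv, fun u hu => not_lt.mp (hvm u hu)⟩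
    have h1 := h.2 v (M.min_mem v hv')
    exact ⟨M.eSet'_subset h.1, fun u hu => h1.trans (hv'.2 u hu)⟩
end

section
/- Let M be a matroid of rank n−k on a ground set E of cardinality n. Then for every 2 ≤ i ≤ k, the CEZ greedy weight g_i satisfies g_i = min { |σ| : σ ∈ N_i and there exists τ ∈ N_{i−1} with τ ⊆ σ and |τ| = d_{i−1} }. -/
open Finset

theorem MatroidRk.nul_mono_s2 {n : ℕ} (M : MatroidRk n) {A B : Finset (Fin n)} (h : A ⊆ B) :
    M.nul A ≤ M.nul B := by
  have h1 := M.r_submod A (B \ A)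
  rw [Finset.union_sdiff_of_subset h] at h1
  have h2 := M.r_le_card (B \ A)
  have h3 := Finset.card_sdiff_add_card_eq_card h
  have h4 := M.r_le_card A
  have h5 := M.r_le_card B
  unfold MatroidRk.nul
  omega

theorem MatroidRk.nul_supermod_s2 {n : ℕ} (M : MatroidRk n) (A B : Finset (Fin n)) :
    M.nul A + M.nul B ≤ M.nul (A ∩ B) + M.nul (A ∪ B) := by
  have h1 := M.r_submod A B
  have h2 := M.r_le_card A
  have h3 := M.r_le_card B
  have h4 := M.r_le_card (A ∩ B)
  have h5 := M.r_le_card (A ∪ B)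
  have h6 := Finset.card_union_add_card_inter A B
  unfold MatroidRk.nul
  omega

theorem MatroidRk.dW_le {n : ℕ} (M : MatroidRk n) (X : Finset (Fin n)) :
    M.dW (M.nul X) ≤ X.card := Nat.sInf_le ⟨X, rfl, rfl⟩

theorem MatroidRk.nmin_of_card {n : ℕ} (M : MatroidRk n) {j : ℕ} {Y : Finset (Fin n)}
    (h : M.nul Y = j) (hc : Y.card = M.dW j) : M.Nmin j Y := by
  refine ⟨h, fun Z hZ hj => Finset.eq_of_subset_of_card_le hZ ?_⟩
  rw [hc, ← hj]
  exact M.dW_le Z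

open MatroidRk in
/-- for `2 ≤ i ≤ k`, the CEZ greedy weight
`g_i = min {|σ| : σ ∈ 𝒩_i, ∃ τ ∈ 𝒩_{i-1}, τ ⊆ σ, |τ| = d_{i-1}}` equals the same minimum
taken over `σ ∈ N_i` and `τ ∈ N_{i-1}`. -/
theorem statement2 {n k : ℕ} (M : MatroidRk n) (hrk : M.r Finset.univ + k = n)
    (i : ℕ) (h2 : 2 ≤ i) (hik : i ≤ k) :
    sInf {c | ∃ X, M.nul X = i ∧
        (∃ Y, M.nul Y = i - 1 ∧ Y ⊆ X ∧ Y.card = M.dW (i - 1)) ∧ X.card = c} =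
    sInf {c | ∃ X, M.Nmin i X ∧
        (∃ Y, M.Nmin (i - 1) Y ∧ Y ⊆ X ∧ Y.card = M.dW (i - 1)) ∧ X.card = c} := by
  have key : ({c | ∃ X, M.nul X = i ∧
        (∃ Y, M.nul Y = i - 1 ∧ Y ⊆ X ∧ Y.card = M.dW (i - 1)) ∧ X.card = c} : Set ℕ).Nonempty →
      sInf {c | ∃ X, M.nul X = i ∧
        (∃ Y, M.nul Y = i - 1 ∧ Y ⊆ X ∧ Y.card = M.dW (i - 1)) ∧ X.card = c} ∈
      {c | ∃ X, M.Nmin i X ∧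
        (∃ Y, M.Nmin (i - 1) Y ∧ Y ⊆ X ∧ Y.card = M.dW (i - 1)) ∧ X.card = c} := by
    intro hne
    obtain ⟨X, hX, ⟨Y, hY, hYX, hYc⟩, hc⟩ := Nat.sInf_mem hne
    have hYm := M.nmin_of_card hY hYc
    refine ⟨X, ⟨hX, fun Z hZ hZi => ?_⟩, ⟨Y, hYm, hYX, hYc⟩, hc⟩
    by_contra hZX
    obtain ⟨x, hxX, hxZ⟩ := Finset.exists_of_ssubset (hZ.ssubset_of_ne hZX)
    have hZe : Z ⊆ X.erase x := Finset.subset_erase.mpr ⟨hZ, hxZ⟩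
    have hXe : M.nul (X.erase x) = i := by
      have h1 := M.nul_mono_s2 hZe
      have h3 := M.nul_mono_s2 (Finset.erase_subset x X)
      omega
    by_cases hxY : x ∈ Y
    · have hs := M.nul_supermod_s2 Y (X.erase x)
      have hU : Y ∪ X.erase x = X := by
        ext a; simp only [Finset.mem_union, Finset.mem_erase]
        constructor
        · rintro (h | h)
          · exact hYX h
          · exact h.2
        · intro h
          by_cases hax : a = x
          · left; rwa [hax]
          · exact Or.inr ⟨hax, h⟩
      have hI : Y ∩ X.erase x = Y.erase x := by
        ext a; simp only [Finset.mem_inter, Finset.mem_erase]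
        exact ⟨fun h => ⟨h.2.1, h.1⟩, fun h => ⟨h.2, h.1, hYX h.2⟩⟩
      rw [hU, hI] at hs
      have h1 := M.nul_mono_s2 (Finset.erase_subset x Y)
      have h3 : Y.erase x = Y := hYm.2 _ (Finset.erase_subset x Y) (by omega)
      exact Finset.notMem_erase x Y (h3.symm ▸ hxY)
    · have h1 := Nat.sInf_le (s := {c | ∃ X, M.nul X = i ∧
        (∃ Y, M.nul Y = i - 1 ∧ Y ⊆ X ∧ Y.card = M.dW (i - 1)) ∧ X.card = c})
        ⟨X.erase x, hXe, ⟨Y, hY, Finset.subset_erase.mpr ⟨hYX, hxY⟩, hYc⟩, rfl⟩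
      have h3 := Finset.card_erase_lt_of_mem hxX
      omega
  apply le_antisymm
  · rcases Set.eq_empty_or_nonempty {c | ∃ X, M.Nmin i X ∧
        (∃ Y, M.Nmin (i - 1) Y ∧ Y ⊆ X ∧ Y.card = M.dW (i - 1)) ∧ X.card = c} with he | hne
    · suffices hs : ({c | ∃ X, M.nul X = i ∧
        (∃ Y, M.nul Y = i - 1 ∧ Y ⊆ X ∧ Y.card = M.dW (i - 1)) ∧ X.card = c} : Set ℕ) = ∅ by
        rw [hs, he]
      by_contra hn
      have hm := key (Set.nonempty_iff_ne_empty.mpr hn)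
      rw [he] at hm
      exact hm
    · obtain ⟨X, hX, ⟨Y, hY, hYX, hYc⟩, hc⟩ := Nat.sInf_mem hne
      exact Nat.sInf_le ⟨X, hX.1, ⟨Y, hY.1, hYX, hYc⟩, hc⟩
  · rcases Set.eq_empty_or_nonempty {c | ∃ X, M.nul X = i ∧
        (∃ Y, M.nul Y = i - 1 ∧ Y ⊆ X ∧ Y.card = M.dW (i - 1)) ∧ X.card = c} with he | hne
    · suffices hs : ({c | ∃ X, M.Nmin i X ∧
        (∃ Y, M.Nmin (i - 1) Y ∧ Y ⊆ X ∧ Y.card = M.dW (i - 1)) ∧ X.card = c} : Set ℕ) = ∅ by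
        rw [hs, he]
      by_contra hn
      obtain ⟨c, X, hX, ⟨Y, hY, hYX, hYc⟩, hc⟩ := Set.nonempty_iff_ne_empty.mpr hn
      have hm : c ∈ {c | ∃ X, M.nul X = i ∧
        (∃ Y, M.nul Y = i - 1 ∧ Y ⊆ X ∧ Y.card = M.dW (i - 1)) ∧ X.card = c} :=
        ⟨X, hX.1, ⟨Y, hY.1, hYX, hYc⟩, hc⟩
      rw [he] at hm
      exact hm
    · exact Nat.sInf_le (key hne)
end

section
/- Let M be a matroid of rank n−k on a ground set E of cardinality n. If a chain S = (σ_1 ⊊ σ_2 ⊊ ⋯ ⊊ σ_k) ∈ Σ achieves the lexicographic minimum, i.e. e(S) = (e_1,…,e_k), then σ_i ∈ N_i for every 1 ≤ i ≤ k. -/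
open Finset

theorem nul_mono_aux {n : ℕ} (M : MatroidRk n) {Y X : Finset (Fin n)} (h : Y ⊆ X) :
    M.nul Y ≤ M.nul X := by
  unfold MatroidRk.nul
  have h1 := M.r_submod Y (X \ Y)
  rw [Finset.union_sdiff_of_subset h] at h1
  have h2 := M.r_le_card (X \ Y)
  have h3 := Finset.card_sdiff_add_card_eq_card h
  have h4 := M.r_le_card X
  have h5 := M.r_le_card Y
  omega

/-- Removing an element that is a coloop of `Z` does not change the nullity of a subset of `Z`. -/
theorem nul_erase_aux {n : ℕ} (M : MatroidRk n) {X Z : Finset (Fin n)} (h : X ⊆ Z) (x : Fin n)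
    (hxZ : x ∈ Z) (hZ : M.nul (Z.erase x) = M.nul Z) : M.nul (X.erase x) = M.nul X := by
  by_cases hx : x ∈ X
  · refine le_antisymm (nul_mono_aux M (Finset.erase_subset _ _)) ?_
    have h1 := M.r_submod X (Z.erase x)
    have e1 : X ∩ Z.erase x = X.erase x := by
      ext y; have := @h y; simp only [Finset.mem_inter, Finset.mem_erase]; tauto
    have e2 : X ∪ Z.erase x = Z := by
      ext y; have := @h y; simp only [Finset.mem_union, Finset.mem_erase]
      by_cases hy : y = x
      · subst hy; tauto
      · tauto
    rw [e1, e2] at h1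
    unfold MatroidRk.nul at *
    have h2 := Finset.card_erase_add_one hx
    have h3 := Finset.card_erase_add_one hxZ
    have h4 := M.r_le_card X
    have h5 := M.r_le_card Z
    have h6 := M.r_le_card (X.erase x)
    have h7 := M.r_le_card (Z.erase x)
    omega
  · rw [Finset.erase_eq_of_notMem hx]

open MatroidRk in
/-- if a chain `S ∈ Σ` achieves the lexicographic minimum, i.e.
`e(S) = (e_1,…,e_k)`, then each `σ_i` lies in `N_i`. -/
theorem statement3 {n k : ℕ} (M : MatroidRk n) (hrk : M.r Finset.univ + k = n)
    (σ : Fin k → Finset (Fin n)) (hσ : M.SigmaChain k σ)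
    (hmin : IsLexMin (M.eSet k) (fun i => (σ i).card)) :
    ∀ i : Fin k, M.Nmin ((i : ℕ) + 1) (σ i) := by
  intro i
  refine ⟨hσ.2 i, fun Y hY hnY => ?_⟩
  by_contra hne
  obtain ⟨x, hx, hxY⟩ := Finset.exists_of_ssubset (hY.ssubset_of_ne hne)
  have hZ : M.nul ((σ i).erase x) = M.nul (σ i) := by
    refine le_antisymm (nul_mono_aux M (Finset.erase_subset _ _)) ?_
    rw [hσ.2 i, ← hnY]
    exact nul_mono_aux M (Finset.subset_erase.2 ⟨hY, hxY⟩)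
  let τ : Fin k → Finset (Fin n) := fun l => if l ≤ i then (σ l).erase x else σ l
  have hτn : ∀ l, M.nul (τ l) = (l : ℕ) + 1 := by
    intro l
    by_cases hl : l ≤ i
    · simp only [τ, if_pos hl]
      rw [nul_erase_aux M (hσ.1.monotone hl) x hx hZ, hσ.2 l]
    · simp only [τ, if_neg hl, hσ.2 l]
  have hτm : StrictMono τ := by
    intro a b hab
    have hsub : τ a ⊆ τ b := by
      have hs : σ a ⊆ σ b := hσ.1.monotone hab.le
      by_cases hb : b ≤ i
      · simp only [τ, if_pos hb, if_pos (hab.le.trans hb)]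
        exact Finset.erase_subset_erase x hs
      · simp only [τ, if_neg hb]
        split_ifs
        · exact (Finset.erase_subset _ _).trans hs
        · exact hs
    refine lt_of_le_of_ne hsub fun he => ?_
    have h1 := hτn a
    rw [he, hτn b] at h1
    have : (a : ℕ) < b := hab
    omega
  have hle := hmin.2 (fun l => (τ l).card) ⟨τ, ⟨hτm, hτn⟩, fun _ => rfl⟩
  have hlt : (fun l => (τ l).card) < (fun l => (σ l).card) := by
    rw [Pi.lt_def]
    refine ⟨fun l => ?_, i, ?_⟩
    · apply Finset.card_le_card
      simp only [τ]
      split_ifs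
      · exact Finset.erase_subset _ _
      · exact Finset.Subset.refl _
    · simp only [τ, le_refl, if_true]
      exact Finset.card_erase_lt_of_mem hx
  exact absurd hle (not_le_of_gt (Pi.toLex_strictMono hlt))
end

section
/- (Wei duality for greedy weights of matroids.) Let M be a matroid of rank n−k on a ground set E of cardinality n, with bottom-up greedy weights (e_1,…,e_k), and let (ẽ̄_1,…,ẽ̄_{n−k}) be the top-down greedy weights of the dual matroid M̄. Then {e_1,…,e_k} ∪ { n+1−ẽ̄_1, …, n+1−ẽ̄_{n−k} } = {1,…,n}. -/
open Finset

namespace MatroidRk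

/-- The rank function of the dual matroid: `r̄(X) = |X| + r(E∖X) - r(E)`. -/
def rDual {n : ℕ} (M : MatroidRk n) (X : Finset (Fin n)) : ℕ :=
  X.card + M.r Xᶜ - M.r Finset.univ

/-- The nullity function of the dual matroid: `n̄(X) = |X| - r̄(X)`. -/
def nulDual {n : ℕ} (M : MatroidRk n) (X : Finset (Fin n)) : ℕ :=
  X.card - M.rDual X

end MatroidRk

open MatroidRk in
/-- The set `{e(S) : S ∈ Σ(M̄)}` for the dual matroid `M̄`, whose chains have `σ_j` of dual
nullity `j`. -/
def eSetDual {n : ℕ} (M : MatroidRk n) (l : ℕ) : Set (Fin l → ℕ) :=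
  {u | ∃ σ : Fin l → Finset (Fin n),
    (StrictMono σ ∧ ∀ j : Fin l, M.nulDual (σ j) = (j : ℕ) + 1) ∧ ∀ j, (σ j).card = u j}

structure GoodSeq (n K : ℕ) (N : ℕ → ℕ) : Prop where
  zero : N 0 = 0
  mono : Monotone N
  step : ∀ m, N (m + 1) ≤ N m + 1
  top : N n = K

/-- first index where the sequence exceeds `i`. -/
noncomputable def fstIdx (N : ℕ → ℕ) (i : ℕ) : ℕ := sInf {m | i + 1 ≤ N m}

namespace GoodSeq

variable {n K : ℕ} {N : ℕ → ℕ}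

lemma fst_le_iff (h : GoodSeq n K N) {i : ℕ} (hi : i < K) (m : ℕ) :
    fstIdx N i ≤ m ↔ i + 1 ≤ N m := by
  have hne : n ∈ {m | i + 1 ≤ N m} := by
    have := h.top
    simp only [Set.mem_ofPred_eq]; omega
  constructor
  · intro hm
    have h1 : i + 1 ≤ N (fstIdx N i) := Nat.sInf_mem (s := {m | i + 1 ≤ N m}) ⟨n, hne⟩
    exact h1.trans (h.mono hm)
  · intro hm
    exact Nat.sInf_le (s := {m | i + 1 ≤ N m}) hm

lemma fst_pos (h : GoodSeq n K N) {i : ℕ} (hi : i < K) : 1 ≤ fstIdx N i := by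
  by_contra hc
  have := (h.fst_le_iff hi 0).1 (by omega)
  have := h.zero
  omega

lemma fst_le (h : GoodSeq n K N) {i : ℕ} (hi : i < K) : fstIdx N i ≤ n := by
  rw [h.fst_le_iff hi, h.top]; omega

lemma at_fst (h : GoodSeq n K N) {i : ℕ} (hi : i < K) :
    N (fstIdx N i) = i + 1 ∧ N (fstIdx N i - 1) = i := by
  have h1 := h.fst_pos hi
  have h2 := (h.fst_le_iff hi (fstIdx N i)).1 le_rfl
  have h3 : ¬ (i + 1 ≤ N (fstIdx N i - 1)) := by
    rw [← h.fst_le_iff hi]; omega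
  have h4 := h.step (fstIdx N i - 1)
  rw [Nat.sub_add_cancel h1] at h4
  omega

lemma fst_strict (h : GoodSeq n K N) {i j : ℕ} (hij : i < j) (hj : j < K) :
    fstIdx N i < fstIdx N j := by
  have h1 := (h.at_fst hj).2
  have h2 := h.fst_pos hj
  have h3 := (h.fst_le_iff (hij.trans hj) (fstIdx N j - 1)).2 (by omega)
  omega

lemma fst_eq (h : GoodSeq n K N) {m : ℕ} (hm : m + 1 ≤ n) (hs : N m < N (m + 1)) :
    N m < K ∧ fstIdx N (N m) = m + 1 := by
  have h0 : N m < K := by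
    have := h.mono hm
    rw [h.top] at this; omega
  refine ⟨h0, le_antisymm ((h.fst_le_iff h0 _).2 hs) ?_⟩
  by_contra hc
  have := (h.fst_le_iff h0 m).1 (by omega)
  omega

lemma lex_step {N' : ℕ → ℕ} (h : GoodSeq n K N) (h' : GoodSeq n K N')
    (hle : toLex (fun i : Fin K => fstIdx N i) ≤ toLex (fun i : Fin K => fstIdx N' i))
    {m : ℕ} (hm : m + 1 ≤ n) (hag : ∀ j ≤ m, N j = N' j) : N' (m + 1) ≤ N (m + 1) := by
  by_contra hc
  push Not at hc
  have e := hag m le_rfl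
  have s' := h'.step m
  have mo := h.mono (Nat.le_succ m)
  simp only [Nat.succ_eq_add_one] at mo
  obtain ⟨hk, hf⟩ := h'.fst_eq hm (by omega)
  refine absurd hle (not_le.2 ?_)
  refine ⟨⟨N' m, hk⟩, ?_, ?_⟩
  · intro j hj
    have hj' : (j : ℕ) < N' m := hj
    show fstIdx N' j = fstIdx N j
    apply le_antisymm
    · have a1 := (h.fst_le_iff j.2 m).2 (by omega)
      rw [h'.fst_le_iff j.2, ← hag _ a1, (h.at_fst j.2).1]
    · have a1 := (h'.fst_le_iff j.2 m).2 (by omega)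
      rw [h.fst_le_iff j.2, hag _ a1, (h'.at_fst j.2).1]
  · show fstIdx N' (N' m) < fstIdx N (N' m)
    rw [hf]
    by_contra hc2
    have := (h.fst_le_iff hk (m + 1)).1 (by omega)
    omega

end GoodSeq

lemma lex_reverse {n K : ℕ} (p q : Fin K → ℕ) (hq : ∀ i, q i ≤ n)
    (hle : toLex (fun i => n + 1 - p i) ≤ toLex (fun i => n + 1 - q i)) :
    toLex q ≤ toLex p := by
  by_contra hc
  obtain ⟨i, h1, h2⟩ := not_le.1 hc
  refine absurd hle (not_le.2 ⟨i, ?_, ?_⟩)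
  · intro j hj
    have : p j = q j := h1 j hj
    show n + 1 - q j = n + 1 - p j
    rw [this]
  · have h2' : p i < q i := h2
    have := hq i
    show n + 1 - q i < n + 1 - p i
    omega

lemma lex_of_le {K : ℕ} (p q : Fin K → ℕ) (h : ∀ i, p i ≤ q i) : toLex p ≤ toLex q :=
  Pi.toLex_monotone (show p ≤ q from h)

/-- A complete flag of subsets. -/
structure IsFlagSeq {n : ℕ} (F : ℕ → Finset (Fin n)) : Prop where
  mono : Monotone F
  card : ∀ m, (F m).card = min m n

lemma exists_refine {n K : ℕ} (τ : Fin K → Finset (Fin n)) (hτ : Monotone τ) :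
    ∃ F : ℕ → Finset (Fin n), IsFlagSeq F ∧ ∀ i, F (τ i).card = τ i := by
  classical
  let g : Fin n → ℕ := fun x => (univ.filter fun i => x ∉ τ i).card
  have hg : ∀ i x y, x ∈ τ i → g y ≤ g x → y ∈ τ i := by
    intro i x y hx hle
    by_contra hy
    refine absurd hle (not_le.2 (Finset.card_lt_card ?_))
    rw [Finset.ssubset_iff_of_subset]
    · exact ⟨i, by simpa using hy, by simpa using hx⟩
    · intro j hj
      simp only [mem_filter, mem_univ, true_and] at hj ⊢
      intro hyj
      rcases le_total i j with h | h
      · exact hj (hτ h hx)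
      · exact hy (hτ h hyj)
  let π := Tuple.sort g
  have hπ : Monotone (g ∘ π) := Tuple.monotone_sort g
  have hcard : ∀ m, (univ.filter fun x : Fin n => (x : ℕ) < m).card = min m n := by
    intro m
    rw [Fin.card_filter_val_lt, min_comm]
  refine ⟨fun m => (univ.filter fun x : Fin n => (x : ℕ) < m).map π.toEmbedding, ⟨?_, ?_⟩, ?_⟩
  · intro a b hab
    apply Finset.map_subset_map.2
    intro x
    simp only [mem_filter, mem_univ, true_and]
    omega
  · intro m
    rw [Finset.card_map, hcard]
  · intro i
    apply Finset.eq_of_subset_of_card_le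
    · intro y hy
      simp only [mem_map, mem_filter, mem_univ, true_and] at hy
      obtain ⟨x, hx, rfl⟩ := hy
      by_contra hc
      have : (τ i).card ≤ (univ.filter fun z : Fin n => (z : ℕ) < x).card := by
        rw [← Finset.card_map (s := univ.filter fun z : Fin n => (z : ℕ) < x) π.toEmbedding]
        apply Finset.card_le_card
        intro z hz
        simp only [mem_map, mem_filter, mem_univ, true_and]
        refine ⟨π.symm z, ?_, by simp⟩
        by_contra hlt
        have hle : x ≤ π.symm z := by
          rw [Fin.le_def]; omega
        have := hπ hle
        simp only [Function.comp, Equiv.apply_symm_apply] at this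
        exact hc (hg i z _ hz this)
      rw [hcard] at this
      omega
    · rw [Finset.card_map, hcard]
      have := Finset.card_le_univ (τ i)
      simp only [Fintype.card_fin] at this
      omega

namespace MatroidRk

variable {n k : ℕ}

lemma r_diff (M : MatroidRk n) {X Y : Finset (Fin n)} (h : X ⊆ Y) :
    M.r Y + X.card ≤ M.r X + Y.card := by
  have h1 := M.r_submod X (Y \ X)
  have h2 := M.r_le_card (Y \ X)
  rw [Finset.union_sdiff_of_subset h] at h1
  have h3 := Finset.card_sdiff_add_card_eq_card h
  omega

lemma nul_add (M : MatroidRk n) (X : Finset (Fin n)) : M.nul X + M.r X = X.card := by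
  have := M.r_le_card X
  unfold nul; omega

lemma nulDual_add (M : MatroidRk n) (X : Finset (Fin n)) :
    M.nulDual X + M.r Xᶜ = M.r univ := by
  have h1 := M.r_mono (Finset.subset_univ Xᶜ)
  have h2 := M.r_diff (Finset.subset_univ Xᶜ)
  have h3 := Finset.card_add_card_compl X
  simp only [Finset.card_univ] at h2
  unfold nulDual rDual
  omega

lemma good_r (M : MatroidRk n) {F : ℕ → Finset (Fin n)} (hF : IsFlagSeq F) :
    GoodSeq n (M.r univ) (fun m => M.r (F m)) where
  zero := by
    have := M.r_le_card (F 0)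
    have := hF.card 0
    omega
  mono := fun a b h => M.r_mono (hF.mono h)
  step := by
    intro m
    have h1 := M.r_diff (hF.mono (Nat.le_succ m))
    have h2 := hF.card m
    have h3 := hF.card (m + 1)
    simp only [Nat.succ_eq_add_one] at h1 ⊢
    omega
  top := by
    have : F n = univ := by
      apply Finset.eq_univ_of_card
      rw [hF.card]; simp
    simp only [this]

lemma good_nul (M : MatroidRk n) (hrk : M.r univ + k = n) {F : ℕ → Finset (Fin n)}
    (hF : IsFlagSeq F) : GoodSeq n k (fun m => M.nul (F m)) where
  zero := by
    have := M.nul_add (F 0)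
    have := hF.card 0
    omega
  mono := by
    intro a b h
    have h1 := M.nul_add (F a)
    have h2 := M.nul_add (F b)
    have := M.r_diff (hF.mono h)
    show M.nul (F a) ≤ M.nul (F b)
    omega
  step := by
    intro m
    have h1 := M.nul_add (F m)
    have h2 := M.nul_add (F (m + 1))
    have h3 := M.r_mono (hF.mono (Nat.le_succ m))
    have h4 := hF.card m
    have h5 := hF.card (m + 1)
    simp only [Nat.succ_eq_add_one] at h3 ⊢
    omega
  top := by
    have h1 := M.nul_add (F n)
    have h2 := (M.good_r hF).top
    have h3 := hF.card n
    omega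

lemma flag_lt {F : ℕ → Finset (Fin n)} (hF : IsFlagSeq F) {a b : ℕ} (h : a < b) (hb : b ≤ n) :
    F a < F b := by
  refine lt_of_le_of_ne (hF.mono h.le) fun he => ?_
  have h1 := hF.card a
  have h2 := hF.card b
  rw [he] at h1
  omega

lemma fst_mem_eSet (M : MatroidRk n) (hrk : M.r univ + k = n) {F : ℕ → Finset (Fin n)}
    (hF : IsFlagSeq F) : (fun i : Fin k => fstIdx (fun m => M.nul (F m)) i) ∈ M.eSet k := by
  have hg := M.good_nul hrk hF
  refine ⟨fun i => F (fstIdx (fun m => M.nul (F m)) i), ⟨?_, ?_⟩, ?_⟩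
  · intro i j hij
    exact flag_lt hF (hg.fst_strict hij j.2) (hg.fst_le j.2)
  · intro i
    exact (hg.at_fst i.2).1
  · intro i
    rw [hF.card, min_eq_left (hg.fst_le i.2)]

lemma fst_mem_eSetDual (M : MatroidRk n) {l : ℕ} (hl : M.r univ = l) {F : ℕ → Finset (Fin n)}
    (hF : IsFlagSeq F) :
    (fun i : Fin l => n + 1 - fstIdx (fun m => M.r (F m)) i.rev) ∈ eSetDual M l := by
  have hg := M.good_r hF
  rw [hl] at hg
  refine ⟨fun i => (F (fstIdx (fun m => M.r (F m)) i.rev - 1))ᶜ, ⟨?_, ?_⟩, ?_⟩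
  · intro i j hij
    have h1 : ((j.rev : Fin l) : ℕ) < i.rev := Fin.rev_lt_rev.2 hij
    have h2 := hg.fst_strict h1 i.rev.2
    have h3 := hg.fst_pos j.rev.2
    have h4 := hg.fst_le i.rev.2
    exact compl_lt_compl_iff_lt.2 (flag_lt hF (by omega) (by omega))
  · intro i
    have h1 := M.nulDual_add (F (fstIdx (fun m => M.r (F m)) i.rev - 1))ᶜ
    rw [compl_compl] at h1
    have h2 := (hg.at_fst i.rev.2).2
    simp only [Fin.val_rev] at h1 h2 ⊢
    have := i.2
    omega
  · intro i
    rw [Finset.card_compl, hF.card, Fintype.card_fin]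
    have h3 := hg.fst_pos i.rev.2
    have h4 := hg.fst_le i.rev.2
    beta_reduce
    rw [min_eq_left (by omega)]
    omega

lemma bottom_up (M : MatroidRk n) (hrk : M.r univ + k = n) (w : Fin k → ℕ)
    (hw : IsLexMin (M.eSet k) w) :
    ∃ F : ℕ → Finset (Fin n), IsFlagSeq F ∧
      w = fun i : Fin k => fstIdx (fun m => M.nul (F m)) i := by
  obtain ⟨⟨σ, ⟨hs, hn⟩, hc⟩, hmin⟩ := hw
  obtain ⟨F, hF, hFs⟩ := exists_refine σ hs.monotone
  refine ⟨F, hF, ?_⟩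
  have hg := M.good_nul hrk hF
  refine toLex.injective (le_antisymm (hmin _ (M.fst_mem_eSet hrk hF)) (lex_of_le _ _ ?_))
  intro i
  rw [hg.fst_le_iff i.2, ← hc, hFs, hn]

lemma top_down (M : MatroidRk n) {l : ℕ} (hl : M.r univ = l) (v : Fin l → ℕ)
    (hv : IsRevLexMin (eSetDual M l) v) :
    ∃ F : ℕ → Finset (Fin n), IsFlagSeq F ∧
      v ∘ Fin.rev = fun i : Fin l => n + 1 - fstIdx (fun m => M.r (F m)) i := by
  obtain ⟨⟨σ, ⟨hs, hn⟩, hc⟩, hmin⟩ := hv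
  obtain ⟨F, hF, hFs⟩ := exists_refine (fun i => (σ i.rev)ᶜ)
    (fun i j hij => compl_le_compl (hs.monotone (Fin.rev_le_rev.2 hij)))
  refine ⟨F, hF, ?_⟩
  have hg := M.good_r hF
  rw [hl] at hg
  have h0 := hmin _ (M.fst_mem_eSetDual hl hF)
  have h1 : (fun i : Fin l => n + 1 - fstIdx (fun m => M.r (F m)) i.rev) ∘ Fin.rev
      = fun i : Fin l => n + 1 - fstIdx (fun m => M.r (F m)) i := by
    funext i
    simp only [Function.comp, Fin.rev_rev]
  rw [h1] at h0
  refine toLex.injective (le_antisymm h0 (lex_of_le _ _ ?_))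
  intro i
  have h2 := M.nulDual_add (σ i.rev)
  rw [hn] at h2
  have h3 := hFs i
  have h4 : ¬ fstIdx (fun m => M.r (F m)) i ≤ ((σ i.rev)ᶜ).card := by
    rw [hg.fst_le_iff i.2]
    beta_reduce at h3 ⊢
    rw [h3]
    have := i.2
    simp only [Fin.val_rev] at h2
    omega
  have h5 := Finset.card_add_card_compl (σ i.rev)
  have h6 := hc i.rev
  simp only [Fintype.card_fin] at h5
  simp only [Function.comp]
  omega

end MatroidRk

open MatroidRk in
/-- Wei duality for greedy weights of matroids: if `(e_1,…,e_k)` are the bottom-up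
greedy weights of `M` and `(ẽ̄_1,…,ẽ̄_{n-k})` the top-down greedy weights of the dual matroid
`M̄`, then `{e_1,…,e_k} ∪ {n+1-ẽ̄_1,…,n+1-ẽ̄_{n-k}} = {1,…,n}`. -/
theorem statement6 {n k : ℕ} (M : MatroidRk n) (hrk : M.r Finset.univ + k = n)
    (w : Fin k → ℕ) (hw : IsLexMin (M.eSet k) w)
    (v : Fin (n - k) → ℕ) (hv : IsRevLexMin (eSetDual M (n - k)) v) :
    {m : ℕ | ∃ i, w i = m} ∪ {m : ℕ | ∃ j, n + 1 - v j = m} = Set.Icc 1 n := by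
  have hl : M.r Finset.univ = n - k := by omega
  obtain ⟨F, hF, hwF⟩ := M.bottom_up hrk w hw
  obtain ⟨G, hG, hvG⟩ := M.top_down hl v hv
  have gF := M.good_nul hrk hF
  have gG := M.good_nul hrk hG
  have rF := M.good_r hF
  have rG := M.good_r hG
  rw [hl] at rF rG
  have hlex1 := hw.2 _ (M.fst_mem_eSet hrk hG)
  rw [hwF] at hlex1
  have hlex2 := hv.2 _ (M.fst_mem_eSetDual hl hF)
  rw [hvG] at hlex2
  have h1 : (fun i : Fin (n - k) => n + 1 - fstIdx (fun m => M.r (F m)) i.rev) ∘ Fin.rev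
      = fun i : Fin (n - k) => n + 1 - fstIdx (fun m => M.r (F m)) i := by
    funext i
    simp only [Function.comp, Fin.rev_rev]
  rw [h1] at hlex2
  have hlex3 := lex_reverse _ _ (fun i => rF.fst_le i.2) hlex2
  have hsum : ∀ m, M.nul (F m) + M.r (F m) = M.nul (G m) + M.r (G m) := by
    intro m
    rw [M.nul_add, M.nul_add, hF.card, hG.card]
  have key : ∀ m, m ≤ n → ∀ j ≤ m, M.nul (F j) = M.nul (G j) := by
    intro m
    induction m with
    | zero =>
      intro _ j hj
      obtain rfl : j = 0 := by omega
      exact gF.zero.trans gG.zero.symm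
    | succ m ih =>
      intro hm j hj
      rcases Nat.lt_or_ge j (m + 1) with h | h
      · exact ih (by omega) j (by omega)
      obtain rfl : j = m + 1 := by omega
      have a1 := gF.lex_step gG hlex1 hm (ih (by omega))
      have a2 := rF.lex_step rG hlex3 hm (fun j hj => by
        have := ih (by omega) j hj
        have := hsum j
        omega)
      have := hsum (m + 1)
      omega
  have hvj : ∀ j : Fin (n - k), n + 1 - v j.rev = fstIdx (fun m => M.r (G m)) j := by
    intro j
    have e := congrFun hvG j
    simp only [Function.comp] at e
    have := rG.fst_le j.2
    omega
  ext m
  simp only [Set.mem_union, Set.mem_ofPred_eq, Set.mem_Icc]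
  constructor
  · rintro (⟨i, rfl⟩ | ⟨j, rfl⟩)
    · rw [hwF]
      exact ⟨gF.fst_pos i.2, gF.fst_le i.2⟩
    · have := hvj j.rev
      rw [Fin.rev_rev] at this
      rw [this]
      exact ⟨rG.fst_pos j.rev.2, rG.fst_le j.rev.2⟩
  · rintro ⟨hm1, hm2⟩
    obtain ⟨m, rfl⟩ : ∃ m', m = m' + 1 := ⟨m - 1, by omega⟩
    by_cases hs : M.nul (F m) < M.nul (F (m + 1))
    · left
      obtain ⟨a, b⟩ := gF.fst_eq hm2 hs
      exact ⟨⟨_, a⟩, by rw [hwF]; exact b⟩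
    · right
      have k1 := key _ hm2 (m + 1) le_rfl
      have k2 := key _ hm2 m (by omega)
      have s1 := M.nul_add (G m)
      have s2 := M.nul_add (G (m + 1))
      have c1 := hG.card m
      have c2 := hG.card (m + 1)
      obtain ⟨a, b⟩ := rG.fst_eq hm2 (show M.r (G m) < M.r (G (m + 1)) by omega)
      exact ⟨Fin.rev ⟨_, a⟩, by rw [hvj]; exact b⟩
end

section
/- Let C be an [n,k] linear code over F_q with parity check matrix H, and let X ⊆ E = {1,…,n}. Let C(X) = { c ∈ C : Supp(c) ⊆ X }. Then Supp(C(X)) = X if and only if X ∈ N_{n(X)}, i.e. X is inclusion-minimal among the subsets of E of nullity n(X) in the matroid M_C. -/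
open Finset
open scoped Classical

noncomputable section

/-- The rank in the matroid `M_C`: `r(X)` is the rank of the column submatrix `H_X`. -/
def colRank {F : Type*} [Field F] {m n : ℕ} (H : Matrix (Fin m) (Fin n) F)
    (X : Finset (Fin n)) : ℕ :=
  Module.finrank F (Submodule.span F ((fun j i => H i j) '' (X : Set (Fin n))))

/-- The nullity function of the matroid `M_C`: `n(X) = |X| - r(X)`. -/
def nulC {F : Type*} [Field F] {m n : ℕ} (H : Matrix (Fin m) (Fin n) F)
    (X : Finset (Fin n)) : ℕ :=
  X.card - colRank H X

/-- The support of a word. -/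
def supp {F : Type*} [Field F] {n : ℕ} (c : Fin n → F) : Finset (Fin n) :=
  Finset.univ.filter (fun i => c i ≠ 0)

/-- The support of a subcode. -/
def suppD {F : Type*} [Field F] {n : ℕ} (D : Submodule F (Fin n → F)) : Finset (Fin n) :=
  Finset.univ.filter (fun i => ∃ c ∈ D, c i ≠ 0)

/-- The weight of a subcode: the cardinality of its support. -/
def wt {F : Type*} [Field F] {n : ℕ} (D : Submodule F (Fin n → F)) : ℕ := (suppD D).card

/-- The subcode `C(X) = {c ∈ C : Supp(c) ⊆ X}`. -/
def codeRestrict {F : Type*} [Field F] {n : ℕ} (C : Submodule F (Fin n → F))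
    (X : Finset (Fin n)) : Submodule F (Fin n → F) where
  carrier := {c | c ∈ C ∧ ∀ i ∉ X, c i = 0}
  add_mem' := by
    rintro a b ⟨ha, ha0⟩ ⟨hb, hb0⟩
    exact ⟨C.add_mem ha hb, fun i hi => by simp [Pi.add_apply, ha0 i hi, hb0 i hi]⟩
  zero_mem' := ⟨C.zero_mem, fun i _ => rfl⟩
  smul_mem' := by
    rintro r a ⟨ha, ha0⟩
    exact ⟨C.smul_mem r ha, fun i hi => by simp [Pi.smul_apply, ha0 i hi]⟩

/-- The code defined by the parity check matrix `H`: `C = {x : H x = 0}`. -/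
def codeOf {F : Type*} [Field F] {m n : ℕ} (H : Matrix (Fin m) (Fin n) F) :
    Submodule F (Fin n → F) :=
  LinearMap.ker H.mulVecLin

/-- The `r`-th generalized Hamming weight of a code `C`. -/
def dC {F : Type*} [Field F] {n : ℕ} (C : Submodule F (Fin n → F)) (r : ℕ) : ℕ :=
  sInf {w | ∃ D : Submodule F (Fin n → F), D ≤ C ∧ Module.finrank F D = r ∧ wt D = w}

/-- `D` computes `d_r(C)`: `D ⊆ C`, `dim D = r` and `wt(D) = d_r(C)`. -/
def Computes {F : Type*} [Field F] {n : ℕ} (C : Submodule F (Fin n → F)) (r : ℕ)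
    (D : Submodule F (Fin n → F)) : Prop :=
  D ≤ C ∧ Module.finrank F D = r ∧ wt D = dC C r

end

theorem nul_add {F : Type*} [Field F] {m n : ℕ} (H : Matrix (Fin m) (Fin n) F)
    (X : Finset (Fin n)) :
    colRank H X + Module.finrank F (codeRestrict (codeOf H) X) = X.card := by
  let v : X → (Fin m → F) := fun j i => H i j
  let L := Fintype.linearCombination F v
  let e : (X → F) →ₗ[F] (Fin n → F) := Function.ExtendByZero.linearMap F Subtype.val
  have he : Function.Injective e := by
    intro a b hab
    funext j
    have := congrFun hab j.1
    simpa [e, Subtype.val_injective.extend_apply] using this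
  have hout : ∀ (a : X → F) (i : Fin n), i ∉ X → e a i = 0 := by
    intro a i hi
    have : ¬ ∃ j : X, j.1 = i := by
      rintro ⟨j, rfl⟩
      exact hi j.2
    simp [e, Function.extend_apply' _ _ _ this]
  have hin : ∀ (a : X → F) (j : X), e a j.1 = a j := by
    intro a j
    simp [e, Subtype.val_injective.extend_apply]
  have hL : ∀ a, H.mulVecLin (e a) = L a := by
    intro a
    funext i
    have h1 : ∑ j, H i j * e a j = ∑ j ∈ X, H i j * e a j := by
      symm
      apply Finset.sum_subset (Finset.subset_univ X)
      intro j _ hj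
      rw [hout a j hj, mul_zero]
    simp only [Matrix.mulVecLin_apply, Matrix.mulVec, dotProduct, L,
      Fintype.linearCombination_apply, Finset.sum_apply, Pi.smul_apply, smul_eq_mul, v]
    rw [h1, ← Finset.sum_coe_sort]
    refine Finset.sum_congr rfl fun j _ => ?_
    rw [hin, mul_comm]
  have hmap : (LinearMap.ker L).map e = codeRestrict (codeOf H) X := by
    ext c
    constructor
    · rintro ⟨a, ha, rfl⟩
      refine ⟨?_, hout a⟩
      change H.mulVecLin (e a) = 0
      rw [hL]
      exact ha
    · rintro ⟨hc, h0⟩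
      have hec : e (fun j => c j.1) = c := by
        funext i
        by_cases hi : i ∈ X
        · exact hin _ ⟨i, hi⟩
        · rw [hout _ i hi, h0 i hi]
      refine ⟨fun j => c j.1, ?_, hec⟩
      change L _ = 0
      rw [← hL, hec]
      exact hc
  have hr : LinearMap.range L
      = Submodule.span F ((fun j i => H i j) '' (X : Set (Fin n))) := by
    rw [Fintype.range_linearCombination]
    congr 1
    ext w
    simp [v]
  have := LinearMap.finrank_range_add_finrank_ker L
  rw [hr] at this
  rw [← hmap, (Submodule.equivMapOfInjective e he _).finrank_eq.symm]
  simpa [colRank] using this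

theorem nul_eq {F : Type*} [Field F] {m n : ℕ} (H : Matrix (Fin m) (Fin n) F)
    (X : Finset (Fin n)) :
    nulC H X = Module.finrank F (codeRestrict (codeOf H) X) := by
  have := nul_add H X
  unfold nulC
  omega

theorem mem_suppD_of {F : Type*} [Field F] {n : ℕ} (D : Submodule F (Fin n → F))
    (c : Fin n → F) (hc : c ∈ D) (i : Fin n) (hi : c i ≠ 0) : i ∈ suppD D :=
  Finset.mem_filter.2 ⟨Finset.mem_univ _, c, hc, hi⟩

theorem suppD_sub {F : Type*} [Field F] {n : ℕ} (C : Submodule F (Fin n → F))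
    (X : Finset (Fin n)) : suppD (codeRestrict C X) ⊆ X := by
  intro i hi
  obtain ⟨c, hc, hci⟩ := (Finset.mem_filter.1 hi).2
  by_contra h
  exact hci (hc.2 i h)

/-- for an `[n,k]` code `C` with parity check matrix `H` and `X ⊆ E`,
`Supp(C(X)) = X` if and only if `X ∈ N_{n(X)}`, i.e. `X` is inclusion-minimal among the
subsets of nullity `n(X)` in the matroid `M_C`. -/
theorem statement8 {F : Type*} [Field F] [Fintype F] {m k n : ℕ} (hmk : m + k = n)
    (H : Matrix (Fin m) (Fin n) F) (hH : H.rank = m) (X : Finset (Fin n)) :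
    suppD (codeRestrict (codeOf H) X) = X ↔
      ∀ Y ⊆ X, nulC H Y = nulC H X → Y = X := by
  constructor
  · intro h Y hY hn
    rw [nul_eq, nul_eq] at hn
    have hle : codeRestrict (codeOf H) Y ≤ codeRestrict (codeOf H) X :=
      fun c hc => ⟨hc.1, fun i hi => hc.2 i fun h' => hi (hY h')⟩
    have heq := Submodule.eq_of_le_of_finrank_eq hle hn
    refine Finset.Subset.antisymm hY ?_
    rw [← h, ← heq]
    exact suppD_sub _ _
  · intro h
    refine h _ (suppD_sub _ _) ?_
    rw [nul_eq, nul_eq]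
    have key : codeRestrict (codeOf H) (suppD (codeRestrict (codeOf H) X))
        = codeRestrict (codeOf H) X := by
      apply le_antisymm
      · exact fun c hc => ⟨hc.1, fun i hi => hc.2 i fun h' => hi (suppD_sub _ _ h')⟩
      · intro c hc
        refine ⟨hc.1, fun i hi => ?_⟩
        by_contra hne
        exact hi (mem_suppD_of _ c hc i hne)
    rw [key]
end
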